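/- In every Euclidean deliberation space (M = X = ℝ^d with the Euclidean metric, d ≥ 1, V ⊆ ℝ^d finite) in which at least one agent approves at least one proposal, every maximal run of compromise transitions is successful: every sequence of compromise transitions is finite, and every deliberative coalition structure from which no compromise transition is possible is successful. -/

import Mathlib

/-!
Termination: the sum of `|C| * 2 ^ |C|` over all coalitions strictly increases along compromise
transitions, because the new coalition is larger than the two it comes from, and it is at most
`n * 2 ^ n` (`no_infinite_run`).

Success of terminal structures: agents approving a common proposal lie in an open half-space
bounded by a hyperplane through `r`, and conversely finitely many agents in such a half-space
approve any proposal sufficiently close to `r` in its normal direction (`exists_approved`).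
Let `(C₁, p₁)` be a largest coalition with `p₁ ≠ r` in a terminal structure. An agent `v ≠ r`
outside `C₁` with `⟪v - r, p₁ - r⟫ ≥ 0` could be added to `C₁` by tilting the direction slightly
towards `v`, so all such agents satisfy `⟪v - r, p₁ - r⟫ < 0` (`inner_neg_of_terminal`). Hence two
further nonempty coalitions of agents other than `r` would both lie in the open half-space of
`-(p₁ - r)` and could be merged (`false_of_two_negative`). So at most one coalition `C₂` besides
`C₁` contains agents other than `r`, and every supporter of an optimal proposal `p` is in
`C₁ ∪ C₂`. If `|C₁| < m*`, these two coalitions could make the transition to `p`, which is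
impossible; therefore `|C₁| = m*` (`successful_of_terminal`).
-/


/-!
Formalization of deliberative coalition formation (Elkind et al., "United for Change:
Deliberative Coalition Formation to Change the Status Quo").

Agents and proposals live in a metric space `M`; `V` is the finite set of agents,
`X ⊆ M` the set of proposals, `r ∈ X` the status quo.  A deliberative coalition
structure is a multiset of deliberative coalitions whose agent sets partition `V`
(empty coalitions are allowed).
-/

open scoped Classical
noncomputable section

variable {M : Type*}

/-- Agent `v` approves proposal `p` relative to status quo `r`
if `v` is strictly closer to `p` than to `r`. -/
def Approves [MetricSpace M] (r v p : M) : Prop := dist v p < dist v r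

/-- The set `C^p` of agents in `C` that approve proposal `p`. -/
def approvers [MetricSpace M] (r : M) (C : Finset M) (p : M) : Finset M :=
  C.filter fun v => Approves r v p

/-- `(C, p)` is a deliberative coalition: `C ⊆ V`, `p ∈ X`, and either `p = r` and no
agent of `C` approves any proposal in `X \ {r}`, or `p ≠ r` and every agent of `C`
approves `p`. -/
def IsCoalition [MetricSpace M] (V : Finset M) (X : Set M) (r : M)
    (C : Finset M) (p : M) : Prop :=
  C ⊆ V ∧ p ∈ X ∧
    ((p = r ∧ ∀ v ∈ C, ∀ x ∈ X, x ≠ r → ¬ Approves r v x) ∨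
     (p ≠ r ∧ ∀ v ∈ C, Approves r v p))

/-- `D` is a deliberative coalition structure: a (finite) multiset of deliberative
coalitions whose agent sets are pairwise disjoint with union `V` (equivalently, the
multiset sum of the agent sets is exactly `V`). Empty coalitions are allowed. -/
def IsStructure [MetricSpace M] (V : Finset M) (X : Set M) (r : M)
    (D : Multiset (Finset M × M)) : Prop :=
  (∀ c ∈ D, IsCoalition V X r c.1 c.2) ∧
    (D.map fun c => c.1.val).sum = V.val

/-- Compromise transition: the approvers of a proposal `p ∈ X` within two coalitions
`(C₁, p₁)` and `(C₂, p₂)` form a new coalition `(C₁^p ∪ C₂^p, p)` whose size exceeds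
both `|C₁|` and `|C₂|`, leaving the dissenters `(C₁ \ C₁^p, p₁)` and `(C₂ \ C₂^p, p₂)`
behind. -/
def CompromiseTransition [MetricSpace M] (V : Finset M) (X : Set M) (r : M)
    (D D' : Multiset (Finset M × M)) : Prop :=
  IsStructure V X r D ∧ IsStructure V X r D' ∧
  ∃ (C₁ C₂ : Finset M) (p₁ p₂ p : M) (D₀ : Multiset (Finset M × M)),
    p ∈ X ∧
    C₁.card < (approvers r C₁ p ∪ approvers r C₂ p).card ∧
    C₂.card < (approvers r C₁ p ∪ approvers r C₂ p).card ∧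
    D = (C₁, p₁) ::ₘ (C₂, p₂) ::ₘ D₀ ∧
    D' = (approvers r C₁ p ∪ approvers r C₂ p, p) ::ₘ
         (C₁ \ approvers r C₁ p, p₁) ::ₘ (C₂ \ approvers r C₂ p, p₂) ::ₘ D₀

/-- The maximum support `m*`: the largest number of agents approving a single proposal
in `X \ {r}`. -/
def maxSupport [MetricSpace M] (V : Finset M) (X : Set M) (r : M) : ℕ :=
  sSup ((fun p => (approvers r V p).card) '' (X \ {r}))

/-- A coalition structure is successful if it contains a deliberative coalition
`(C, p)` with `p ≠ r` and `|C| = m*`. -/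
def Successful [MetricSpace M] (V : Finset M) (X : Set M) (r : M)
    (D : Multiset (Finset M × M)) : Prop :=
  ∃ c ∈ D, c.2 ≠ r ∧ c.1.card = maxSupport V X r

/-! ### Termination -/

/-- Potential that strictly increases along compromise transitions: the sum of
`|C| * 2 ^ |C|` over all coalitions. Empty coalitions contribute nothing, so the growing number of
coalitions does not spoil the bound `potential_le`. -/
def potential (D : Multiset (Finset M × M)) : ℕ :=
  (D.map fun c => c.1.card * 2 ^ c.1.card).sum

lemma mem_structure_iff [MetricSpace M] {V : Finset M} {X : Set M} {r : M}
    {D : Multiset (Finset M × M)} (hD : IsStructure V X r D) (v : M) :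
    v ∈ V ↔ ∃ c ∈ D, v ∈ c.1 := by
  rw [← Finset.mem_val, ← hD.2]
  exact Multiset.mem_bind

lemma potential_le [MetricSpace M] {V : Finset M} {X : Set M} {r : M}
    {D : Multiset (Finset M × M)} (hD : IsStructure V X r D) :
    potential D ≤ V.card * 2 ^ V.card := by
  have h1 : (D.map fun c => c.1.card).sum = V.card := by
    have h := congrArg Multiset.card hD.2
    rwa [← Multiset.cardHom_apply, map_multiset_sum, Multiset.map_map] at h
  have h2 : potential D ≤ (D.map fun c => c.1.card * 2 ^ V.card).sum :=
    Multiset.sum_map_le_sum_map _ _ fun c hc =>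
      Nat.mul_le_mul_left _ (Nat.pow_le_pow_right (by norm_num)
        (Finset.card_le_card (hD.1 c hc).1))
  rwa [Multiset.sum_map_mul_right, h1] at h2

lemma potential_lt [MetricSpace M] {V : Finset M} {X : Set M} {r : M}
    {D D' : Multiset (Finset M × M)} (h : CompromiseTransition V X r D D') :
    potential D < potential D' := by
  obtain ⟨-, -, C₁, C₂, p₁, p₂, p, D₀, -, h1, h2, rfl, rfl⟩ := h
  simp only [potential, Multiset.map_cons, Multiset.sum_cons]
  set c := (approvers r C₁ p ∪ approvers r C₂ p).card
  obtain ⟨k, hk⟩ : ∃ k, c = k + 1 := ⟨c - 1, by omega⟩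
  -- Each of the two old coalitions has at most `k = c - 1` members, and
  -- `2 * (k * 2 ^ k) < (k + 1) * 2 ^ (k + 1)`.
  have e1 : C₁.card * 2 ^ C₁.card ≤ k * 2 ^ k :=
    Nat.mul_le_mul (by omega) (Nat.pow_le_pow_right (by norm_num) (by omega))
  have e2 : C₂.card * 2 ^ C₂.card ≤ k * 2 ^ k :=
    Nat.mul_le_mul (by omega) (Nat.pow_le_pow_right (by norm_num) (by omega))
  have e3 : (k + 1) * 2 ^ (k + 1) = 2 * (k * 2 ^ k) + 2 * 2 ^ k := by ring
  have e4 : 0 < 2 ^ k := by positivity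
  rw [hk, e3]
  omega

lemma no_infinite_run [MetricSpace M] {V : Finset M} {X : Set M} {r : M} :
    ¬ ∃ Ds : ℕ → Multiset (Finset M × M),
      ∀ i : ℕ, CompromiseTransition V X r (Ds i) (Ds (i + 1)) := by
  rintro ⟨Ds, h⟩
  have hmono : StrictMono fun i => potential (Ds i) :=
    strictMono_nat_of_lt_succ fun i => potential_lt (h i)
  have h1 := hmono.le_apply (x := V.card * 2 ^ V.card + 1)
  have h2 := potential_le (h (V.card * 2 ^ V.card + 1)).1
  exact absurd (h1.trans h2) (Nat.not_succ_le_self _)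

/-! ### Existence of transitions -/

lemma not_approves_self [MetricSpace M] (r v : M) : ¬ Approves r v r := lt_irrefl _

lemma disjoint_of_structure [MetricSpace M] {V : Finset M} {X : Set M} {r : M}
    {c₁ c₂ : Finset M × M} {D₀ : Multiset (Finset M × M)}
    (hD : IsStructure V X r (c₁ ::ₘ c₂ ::ₘ D₀)) : Disjoint c₁.1 c₂.1 := by
  have hsum := hD.2
  simp only [Multiset.map_cons, Multiset.sum_cons] at hsum
  have hnd : (c₁.1.val + (c₂.1.val + (D₀.map fun c => c.1.val).sum)).Nodup := hsum ▸ V.nodup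
  rw [← Finset.disjoint_val]
  exact (Multiset.disjoint_add_right.1 (Multiset.nodup_add.1 hnd).2.2).1

/-- A transition is available as soon as some proposal is approved by a set `S` of agents from
two coalitions that outnumbers both of them; the remaining requirements, in particular that the
result is again a structure, are automatic. -/
lemma exists_transition [MetricSpace M] {V : Finset M} {X : Set M} {r : M}
    {C₁ C₂ : Finset M} {p₁ p₂ : M} {D₀ : Multiset (Finset M × M)}
    (hD : IsStructure V X r ((C₁, p₁) ::ₘ (C₂, p₂) ::ₘ D₀))
    {p : M} (hp : p ∈ X) {S : Finset M} (hS : S ⊆ C₁ ∪ C₂) (hSp : ∀ v ∈ S, Approves r v p)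
    (h1 : C₁.card < S.card) (h2 : C₂.card < S.card) :
    ∃ D', CompromiseTransition V X r ((C₁, p₁) ::ₘ (C₂, p₂) ::ₘ D₀) D' := by
  have hsub : S ⊆ approvers r C₁ p ∪ approvers r C₂ p := by
    intro v hv
    have := hS hv
    simp only [approvers, Finset.mem_union, Finset.mem_filter] at this ⊢
    have := hSp v hv
    tauto
  have hcard := Finset.card_le_card hsub
  have hpr : p ≠ r := by
    rintro rfl
    obtain ⟨v, hv⟩ := Finset.card_pos.1 (by omega : 0 < S.card)
    exact not_approves_self _ _ (hSp v hv)
  refine ⟨_, hD, ⟨?_, ?_⟩, C₁, C₂, p₁, p₂, p, D₀, hp, by omega, by omega, rfl, rfl⟩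
  · have hc1 := hD.1 (C₁, p₁) (by simp)
    have hc2 := hD.1 (C₂, p₂) (by simp)
    have shrink : ∀ (C C' : Finset M) (q : M), C' ⊆ C → IsCoalition V X r C q →
        IsCoalition V X r C' q := by
      rintro C C' q hCC ⟨a, b, c⟩
      exact ⟨hCC.trans a, b, c.imp (fun h => ⟨h.1, fun v hv => h.2 v (hCC hv)⟩)
        (fun h => ⟨h.1, fun v hv => h.2 v (hCC hv)⟩)⟩
    intro c hc
    simp only [Multiset.mem_cons] at hc
    rcases hc with rfl | rfl | rfl | hc
    · refine ⟨?_, hp, Or.inr ⟨hpr, ?_⟩⟩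
      · exact Finset.union_subset ((Finset.filter_subset _ _).trans hc1.1)
          ((Finset.filter_subset _ _).trans hc2.1)
      · intro v hv
        simp only [approvers, Finset.mem_union, Finset.mem_filter] at hv
        tauto
    · exact shrink _ _ _ Finset.sdiff_subset hc1
    · exact shrink _ _ _ Finset.sdiff_subset hc2
    · exact hD.1 c (by simp [hc])
  · have hsum := hD.2
    simp only [Multiset.map_cons, Multiset.sum_cons] at hsum ⊢
    have hdisj : Disjoint C₁ C₂ := disjoint_of_structure hD
    have hu : (approvers r C₁ p ∪ approvers r C₂ p).val
        = (approvers r C₁ p).val + (approvers r C₂ p).val := by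
      have hdisj' : Disjoint (approvers r C₁ p) (approvers r C₂ p) :=
        Finset.disjoint_filter_filter hdisj
      rw [← Finset.disjUnion_eq_union _ _ hdisj']
      rfl
    have split : ∀ C : Finset M,
        (approvers r C p).val + (C \ approvers r C p).val = C.val := by
      intro C
      rw [Finset.sdiff_val]
      exact add_tsub_cancel_of_le (Finset.val_le_iff.2 (Finset.filter_subset _ _))
    rw [← split C₁, ← split C₂] at hsum
    rw [hu, ← hsum]
    abel

/-! ### Geometry of approval -/

section Euclid

variable {E : Type*} [NormedAddCommGroup E] [InnerProductSpace ℝ E]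

lemma approves_iff (r v p : E) :
    Approves r v p ↔ ‖p - r‖ ^ 2 < 2 * inner ℝ (v - r) (p - r) := by
  unfold Approves
  rw [dist_eq_norm, dist_eq_norm, ← sq_lt_sq₀ (norm_nonneg _) (norm_nonneg _)]
  have : v - p = (v - r) - (p - r) := by abel
  rw [this, norm_sub_sq_real]
  constructor <;> intro h <;> linarith

lemma Approves.inner_pos {r v p : E} (h : Approves r v p) : 0 < inner ℝ (v - r) (p - r) := by
  rw [approves_iff] at h
  nlinarith [sq_nonneg ‖p - r‖]

lemma Approves.ne {r v p : E} (h : Approves r v p) : v ≠ r := by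
  rintro rfl
  simpa using h.inner_pos

open Filter Topology in
/-- Finitely many agents in a common open half-space bounded by a hyperplane through `r` approve
a common proposal, namely any one close enough to `r` in the normal direction. -/
lemma exists_approved (r : E) (S : Finset E) (u : E)
    (hu : ∀ v ∈ S, 0 < inner ℝ (v - r) u) : ∃ p, ∀ v ∈ S, Approves r v p := by
  have key : ∀ᶠ t : ℝ in 𝓝[>] 0, ∀ v ∈ S, Approves r v (r + t • u) := by
    rw [Filter.eventually_all_finset]
    intro v hv
    have hc : Tendsto (fun t : ℝ => t * ‖u‖ ^ 2) (𝓝[>] 0) (𝓝 0) := by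
      have : Continuous fun t : ℝ => t * ‖u‖ ^ 2 := by fun_prop
      simpa using (this.tendsto 0).mono_left nhdsWithin_le_nhds
    have hpos : 0 < 2 * inner ℝ (v - r) u := by linarith [hu v hv]
    filter_upwards [hc.eventually_lt_const hpos, self_mem_nhdsWithin] with t ht ht0
    have ht0 : 0 < t := ht0
    rw [approves_iff, add_sub_cancel_left, inner_smul_right, norm_smul, Real.norm_eq_abs,
      mul_pow, sq_abs]
    nlinarith
  obtain ⟨t, ht⟩ := key.exists
  exact ⟨_, ht⟩

open Filter Topology in
/-- If `v ≠ r` lies weakly on the positive side of a direction that is strictly positive on `C`,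
tilting that direction slightly towards `v` makes it strictly positive on `v` as well. -/
lemma exists_approved_insert (r : E) (C : Finset E) (u v : E)
    (hu : ∀ w ∈ C, 0 < inner ℝ (w - r) u) (hv : v ≠ r) (h : 0 ≤ inner ℝ (v - r) u) :
    ∃ p, ∀ w ∈ insert v C, Approves r w p := by
  have key : ∀ᶠ t : ℝ in 𝓝[>] 0, ∀ w ∈ C, 0 < inner ℝ (w - r) (u + t • (v - r)) := by
    rw [Filter.eventually_all_finset]
    intro w hw
    have hc : Tendsto (fun t : ℝ => inner ℝ (w - r) (u + t • (v - r))) (𝓝[>] 0)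
        (𝓝 (inner ℝ (w - r) u)) := by
      have : Continuous fun t : ℝ => inner ℝ (w - r) (u + t • (v - r)) := by fun_prop
      simpa using (this.tendsto 0).mono_left nhdsWithin_le_nhds
    exact hc.eventually_const_lt (hu w hw)
  obtain ⟨t, ht, ht0⟩ := (key.and self_mem_nhdsWithin).exists
  have ht0 : 0 < t := ht0
  refine exists_approved r _ (u + t • (v - r)) fun w hw => ?_
  rcases Finset.mem_insert.1 hw with rfl | hw
  · rw [inner_add_right, inner_smul_right, real_inner_self_eq_norm_sq]
    have : 0 < ‖w - r‖ := norm_pos_iff.2 (sub_ne_zero.2 hv)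
    positivity
  · exact ht w hw

/-! ### Terminal structures -/

/-- In a terminal structure, every agent other than `r` in a coalition no larger than `(C₁, p₁)`,
`p₁ ≠ r`, lies strictly on the negative side of the direction of `p₁`: otherwise it could join
`C₁` on a slightly tilted proposal. -/
lemma inner_neg_of_terminal {V : Finset E} {r : E}
    {c₁ c₂ : Finset E × E} {D₀ : Multiset (Finset E × E)}
    (hD : IsStructure V Set.univ r (c₁ ::ₘ c₂ ::ₘ D₀))
    (hterm : ¬ ∃ D', CompromiseTransition V Set.univ r (c₁ ::ₘ c₂ ::ₘ D₀) D')
    (hp₁ : c₁.2 ≠ r) (hle : c₂.1.card ≤ c₁.1.card) {v : E} (hv : v ∈ c₂.1) (hvr : v ≠ r) :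
    inner ℝ (v - r) (c₁.2 - r) < 0 := by
  by_contra! hcon
  have hdisj := disjoint_of_structure hD
  have happ : ∀ w ∈ c₁.1, Approves r w c₁.2 := by
    rcases (hD.1 c₁ (by simp)).2.2 with h | h
    · exact absurd h.1 hp₁
    · exact h.2
  obtain ⟨p, hp⟩ := exists_approved_insert r c₁.1 (c₁.2 - r) v
    (fun w hw => (happ w hw).inner_pos) hvr hcon
  have hcard : (insert v c₁.1).card = c₁.1.card + 1 :=
    Finset.card_insert_of_notMem (Finset.disjoint_right.1 hdisj hv)
  refine hterm (exists_transition hD (Set.mem_univ p) (S := insert v c₁.1) ?_ hp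
    (by omega) (by omega))
  intro w hw
  rcases Finset.mem_insert.1 hw with rfl | hw <;> simp [*]

/-- Two coalitions avoiding `r` and lying on the negative side of a common direction `u` can be
merged, hence in a terminal structure they are not both nonempty. -/
lemma false_of_two_negative {V : Finset E} {r : E}
    {c₂ c₃ : Finset E × E} {D₀ : Multiset (Finset E × E)}
    (hD : IsStructure V Set.univ r (c₂ ::ₘ c₃ ::ₘ D₀))
    (hterm : ¬ ∃ D', CompromiseTransition V Set.univ r (c₂ ::ₘ c₃ ::ₘ D₀) D')
    (u : E) (h₂ : ∀ v ∈ c₂.1, inner ℝ (v - r) u < 0) (h₃ : ∀ v ∈ c₃.1, inner ℝ (v - r) u < 0)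
    (ne₂ : c₂.1.Nonempty) (ne₃ : c₃.1.Nonempty) : False := by
  obtain ⟨p, hp⟩ := exists_approved r (c₂.1 ∪ c₃.1) (-u) (fun v hv => by
    rw [inner_neg_right]
    rcases Finset.mem_union.1 hv with h | h
    · linarith [h₂ v h]
    · linarith [h₃ v h])
  have hcard := Finset.card_union_of_disjoint (disjoint_of_structure hD)
  have := ne₂.card_pos
  have := ne₃.card_pos
  exact hterm (exists_transition hD (Set.mem_univ p) (Finset.Subset.refl _) hp
    (by omega) (by omega))

/-- If one agent of a coalition approves some proposal, no agent of the coalition is at `r`. -/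
lemma IsCoalition.forall_ne {V C : Finset E} {r p v q : E} (h : IsCoalition V Set.univ r C p)
    (hv : v ∈ C) (hq : Approves r v q) : ∀ w ∈ C, w ≠ r := by
  rcases h.2.2 with h | h
  · refine absurd hq (h.2 v hv q (Set.mem_univ _) ?_)
    rintro rfl
    exact not_approves_self _ _ hq
  · exact fun w hw => (h.2 w hw).ne

lemma successful_of_terminal {V : Finset E} {r : E}
    (hex : ∃ v ∈ V, ∃ p : E, p ≠ r ∧ Approves r v p) {D : Multiset (Finset E × E)}
    (hD : IsStructure V Set.univ r D)
    (hterm : ¬ ∃ D', CompromiseTransition V Set.univ r D D') :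
    Successful V Set.univ r D := by
  -- a largest coalition `c₁` among those with a proposal other than `r`
  obtain ⟨c₁, hc₁, hp₁, hmax⟩ : ∃ c₁ ∈ D, c₁.2 ≠ r ∧
      ∀ c ∈ D, c.2 ≠ r → c.1.card ≤ c₁.1.card := by
    obtain ⟨v, hv, p, hp, hvp⟩ := hex
    obtain ⟨c, hc, hvc⟩ := (mem_structure_iff hD v).1 hv
    have hcr : c.2 ≠ r := by
      rcases (hD.1 c hc).2.2 with h | h
      · exact absurd hvp (h.2 v hvc p (Set.mem_univ _) hp)
      · exact h.1
    obtain ⟨c₁, h1, h2⟩ := Finset.exists_max_image (D.toFinset.filter fun c => c.2 ≠ r)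
      (fun c => c.1.card) ⟨c, by simp [hc, hcr]⟩
    simp only [Finset.mem_filter, Multiset.mem_toFinset] at h1 h2
    exact ⟨c₁, h1.1, h1.2, fun c hc hcr => h2 c ⟨hc, hcr⟩⟩
  have hmem : c₁.2 ∈ Set.univ \ {r} := ⟨Set.mem_univ _, hp₁⟩
  have hbdd : BddAbove ((fun p => (approvers r V p).card) '' (Set.univ \ {r})) := by
    refine ⟨V.card, ?_⟩
    rintro _ ⟨p, -, rfl⟩
    exact Finset.card_le_card (Finset.filter_subset _ _)
  have hle : c₁.1.card ≤ maxSupport V Set.univ r := by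
    have hsup : (approvers r V c₁.2).card ≤ maxSupport V Set.univ r :=
      le_csSup hbdd ⟨c₁.2, hmem, rfl⟩
    refine le_trans (Finset.card_le_card ?_) hsup
    rcases (hD.1 c₁ hc₁).2.2 with h | h
    · exact absurd h.1 hp₁
    · exact fun v hv => Finset.mem_filter.2 ⟨(hD.1 c₁ hc₁).1 hv, h.2 v hv⟩
  obtain ⟨p, -, hp⟩ : ∃ p ∈ Set.univ \ {r}, (approvers r V p).card = maxSupport V Set.univ r :=
    Nat.sSup_mem (Set.Nonempty.image _ ⟨c₁.2, hmem⟩) hbdd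
  refine ⟨c₁, hc₁, hp₁, hle.antisymm ?_⟩
  by_contra! hlt
  rw [← hp] at hlt
  -- `v` is an agent approving the optimal proposal `p` outside the largest coalition
  obtain ⟨v, hv, hvc⟩ := Finset.exists_mem_notMem_of_card_lt_card hlt
  obtain ⟨hvV, hvp⟩ := Finset.mem_filter.1 hv
  obtain ⟨D₁, rfl⟩ := Multiset.exists_cons_of_mem hc₁
  obtain ⟨c₂, hc₂, hvc₂⟩ := (mem_structure_iff hD v).1 hvV
  have hc₂' : c₂ ∈ D₁ := by
    rcases Multiset.mem_cons.1 hc₂ with rfl | h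
    · exact absurd hvc₂ hvc
    · exact h
  have card_le : ∀ c ∈ c₁ ::ₘ D₁, ∀ w ∈ c.1, Approves r w p → c.1.card ≤ c₁.1.card := by
    intro c hc w hw hwp
    refine hmax c hc fun hcr => ?_
    rcases (hD.1 c hc).2.2 with h | h
    · refine h.2 w hw p (Set.mem_univ _) ?_ hwp
      rintro rfl
      exact not_approves_self _ _ hwp
    · exact h.1 hcr
  have hneg : ∀ c ∈ D₁, ∀ w ∈ c.1, Approves r w p →
      ∀ w' ∈ c.1, inner ℝ (w' - r) (c₁.2 - r) < 0 := by
    intro c hc w hw hwp w' hw'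
    obtain ⟨D₀, rfl⟩ := Multiset.exists_cons_of_mem hc
    exact inner_neg_of_terminal hD hterm hp₁ (card_le c (by simp) w hw hwp) hw'
      ((hD.1 c (by simp)).forall_ne hw hwp w' hw')
  have h₂ := hneg c₂ hc₂' v hvc₂ hvp
  have hle₂ := card_le c₂ hc₂ v hvc₂ hvp
  obtain ⟨D₀, rfl⟩ := Multiset.exists_cons_of_mem hc₂'
  -- all supporters of `p` are in `c₁` or `c₂`, so these two could adopt `p`
  refine hterm (exists_transition hD (Set.mem_univ p) (S := approvers r V p) ?_
    (fun w hw => (Finset.mem_filter.1 hw).2) hlt (by omega))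
  intro w hw
  obtain ⟨hwV, hwp⟩ := Finset.mem_filter.1 hw
  obtain ⟨c₃, hc₃, hwc₃⟩ := (mem_structure_iff hD w).1 hwV
  rcases Multiset.mem_cons.1 hc₃ with rfl | hc₃
  · exact Finset.mem_union_left _ hwc₃
  rcases Multiset.mem_cons.1 hc₃ with rfl | hc₃'
  · exact Finset.mem_union_right _ hwc₃
  exfalso
  have h₃ := hneg c₃ hc₃ w hwc₃ hwp
  obtain ⟨D₂, rfl⟩ := Multiset.exists_cons_of_mem hc₃'
  have hperm : c₁ ::ₘ c₂ ::ₘ c₃ ::ₘ D₂ = c₂ ::ₘ c₃ ::ₘ c₁ ::ₘ D₂ := by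
    rw [Multiset.cons_swap c₁ c₂, Multiset.cons_swap c₁ c₃]
  rw [hperm] at hD hterm
  exact false_of_two_negative hD hterm (c₁.2 - r) h₂ h₃ ⟨v, hvc₂⟩ ⟨w, hwc₃⟩

end Euclid

/-- In every Euclidean deliberation space (`M = X = ℝ^d`, `d ≥ 1`,
`V ⊆ ℝ^d` finite) in which at least one agent approves at least one proposal, every
maximal run of compromise transitions is successful: every sequence of compromise
transitions is finite, and every deliberative coalition structure from which no
compromise transition is possible is successful. -/
theorem compromise_maximal_run_successful_euclidean
    (d : ℕ) (hd : 1 ≤ d)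
    (V : Finset (EuclideanSpace ℝ (Fin d))) (r : EuclideanSpace ℝ (Fin d))
    (hex : ∃ v ∈ V, ∃ p : EuclideanSpace ℝ (Fin d), p ≠ r ∧ Approves r v p) :
    (¬ ∃ Ds : ℕ → Multiset (Finset (EuclideanSpace ℝ (Fin d)) × EuclideanSpace ℝ (Fin d)),
        ∀ i : ℕ, CompromiseTransition V Set.univ r (Ds i) (Ds (i + 1))) ∧
    (∀ D : Multiset (Finset (EuclideanSpace ℝ (Fin d)) × EuclideanSpace ℝ (Fin d)),
        IsStructure V Set.univ r D →
        (¬ ∃ D', CompromiseTransition V Set.univ r D D') →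
        Successful V Set.univ r D) := by
  exact ⟨no_infinite_run, fun D hD hterm => successful_of_terminal hex hD hterm⟩
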